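/- arXiv:2211.16561 — 3 statements merged into one kernel-verified Lean document; each statement's English description precedes it below -/
import Mathlib

section
/- For every even positive integer n and prime power q, there exists a tight irreducible affine vector space partition of AG(n-1, q) consisting of q^{n/2} pairwise disjoint affine subspaces each of affine dimension n/2 - 1 (projective dimension n/2); it is obtained from an (n/2)-spread of PG(n-1,q) by removing one spread element and choosing a hyperplane through it as the hyperplane at infinity. -/
open scoped Pointwise

/-- An affine vector space partition of `F^m`: a set of proper, nonempty affine
subspaces such that every point lies in exactly one element. -/
def IsAVSP {F : Type*} [Field F] {m : ℕ}
    (A : Set (AffineSubspace F (Fin m → F))) : Prop :=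
  (∀ s ∈ A, s ≠ ⊤) ∧ (∀ s ∈ A, (s : Set (Fin m → F)).Nonempty) ∧
    ∀ x : Fin m → F, ∃! s, s ∈ A ∧ x ∈ s

/-- Tightness: no nonzero translation fixes every element. -/
def IsTight {F : Type*} [Field F] {m : ℕ}
    (A : Set (AffineSubspace F (Fin m → F))) : Prop :=
  ∀ x : Fin m → F, x ≠ 0 →
    ∃ s ∈ A, x +ᵥ (s : Set (Fin m → F)) ≠ (s : Set (Fin m → F))

/-- Reducibility: some subfamily of size `> 1` partitions the points of a proper
affine subspace. -/
def IsReducible {F : Type*} [Field F] {m : ℕ}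
    (A : Set (AffineSubspace F (Fin m → F))) : Prop :=
  ∃ U : AffineSubspace F (Fin m → F), U ≠ ⊤ ∧
    ∃ S ⊆ A, 1 < S.ncard ∧ (∀ s ∈ S, s ≤ U) ∧
      ∀ x ∈ U, ∃! s, s ∈ S ∧ x ∈ s


theorem stmt14_aux {F K : Type*} [Field F] [Fintype F] [Field K] [Algebra F K]
    [FiniteDimensional F K] (k m : ℕ) (hk : Module.finrank F K = k) (hm : m + 1 = 2 * k) :
    ∃ A : Set (AffineSubspace F (Fin m → F)), IsAVSP A ∧ IsTight A ∧
      ¬ IsReducible A ∧ A.ncard = Nat.card K ∧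
      (∀ s ∈ A, Module.finrank F s.direction = k - 1) ∧
      A.Pairwise fun s t => Disjoint (s : Set (Fin m → F)) (t : Set (Fin m → F)) := by
  classical
  obtain ⟨P, hP⟩ := Submodule.exists_isCompl (Submodule.span F {(1 : K)})
  have hdim := Submodule.finrank_add_eq_of_isCompl hP
  rw [finrank_span_singleton one_ne_zero, hk] at hdim
  have hne : ∀ w : P, (1 : K) + w ≠ 0 := by
    intro w hw
    have h1 : (1 : K) ∈ P := by
      have : (1 : K) = -(w : K) := eq_neg_of_add_eq_zero_left hw
      rw [this]
      exact P.neg_mem w.2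
    have := Submodule.disjoint_def.1 hP.disjoint 1 (Submodule.mem_span_singleton_self 1) h1
    exact one_ne_zero this
  have hfr : Module.finrank F (Fin m → F) = Module.finrank F (P × K) := by
    rw [Module.finrank_prod, Module.finrank_fin_fun, hk]
    omega
  let L : (Fin m → F) ≃ₗ[F] P × K := LinearEquiv.ofFinrankEq _ _ hfr
  let g : K → (Fin m → F) →ₗ[F] K := fun a =>
    (LinearMap.snd F P K - (LinearMap.mulLeft F a) ∘ₗ P.subtype ∘ₗ LinearMap.fst F P K)
      ∘ₗ L.toLinearMap
  have hg : ∀ a v, g a v = (L v).2 - a * (L v).1 := fun a v => rfl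
  let s : K → AffineSubspace F (Fin m → F) := fun a =>
    AffineSubspace.mk' (L.symm (0, a)) (LinearMap.ker (g a))
  have hs : ∀ a v, v ∈ s a ↔ (L v).2 = a * (1 + (L v).1) := by
    intro a v
    simp only [s, AffineSubspace.mem_mk', LinearMap.mem_ker, hg, vsub_eq_sub, map_sub,
      LinearEquiv.apply_symm_apply, Prod.fst_sub, Prod.snd_sub, sub_zero]
    constructor <;> intro h <;> linear_combination h
  have hpt : ∀ a, L.symm (0, a) ∈ s a := by
    intro a
    simp [hs]
  have hdisj : ∀ a b v, v ∈ s a → v ∈ s b → a = b := by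
    intro a b v ha hb
    rw [hs] at ha hb
    exact mul_right_cancel₀ (hne (L v).1) (ha.symm.trans hb)
  have hinj : Function.Injective s := by
    intro a b hab
    exact hdisj a b _ (hpt a) (hab ▸ hpt a)
  have hdir : ∀ a, (s a).direction = LinearMap.ker (g a) := fun a =>
    AffineSubspace.direction_mk' _ _
  refine ⟨Set.range s, ⟨?_, ?_, ?_⟩, ?_, ?_, ?_, ?_, ?_⟩
  · rintro _ ⟨a, rfl⟩ h
    have : L.symm (0, a + 1) ∈ s a := by rw [h]; trivial
    simp [hs] at this
  · rintro _ ⟨a, rfl⟩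
    exact ⟨_, hpt a⟩
  · intro v
    have hv := hne (L v).1
    have hmem : v ∈ s ((L v).2 / (1 + (L v).1)) := by
      rw [hs]; field_simp
    refine ⟨_, ⟨⟨_, rfl⟩, hmem⟩, ?_⟩
    rintro _ ⟨⟨b, rfl⟩, hb⟩
    rw [hdisj _ _ v hb hmem]
  · intro x hx
    by_contra! hcon
    have key : ∀ a, (L x).2 = a * (L x).1 := by
      intro a
      have h1 : x +ᵥ L.symm (0, a) ∈ x +ᵥ (s a : Set (Fin m → F)) :=
        Set.vadd_mem_vadd_set (hpt a)
      rw [hcon _ ⟨a, rfl⟩] at h1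
      have h2 := (hs _ _).1 h1
      simp at h2
      linear_combination h2
    have h0 : (L x).2 = 0 := by simpa using key 0
    have h1 : ((L x).1 : K) = 0 := by simpa [h0] using (key 1).symm
    apply hx
    apply L.injective
    rw [map_zero]
    exact Prod.ext (Subtype.ext h1) h0
  · rintro ⟨U, hU, S, hSA, hS1, hSU, -⟩
    apply hU
    obtain ⟨_, hsa, _, hsb, hab⟩ := (Set.one_lt_ncard_iff_nontrivial_and_finite.1 hS1).1
    obtain ⟨a, rfl⟩ := hSA hsa
    obtain ⟨b, rfl⟩ := hSA hsb
    have hab' : a - b ≠ 0 := sub_ne_zero.2 fun h => hab (h ▸ rfl)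
    have ha := hSU _ hsa
    have hb := hSU _ hsb
    -- differences
    have hd : ∀ w : P, L.symm (0, (a - b) * (1 + w)) ∈ U.direction := by
      intro w
      have h1 : L.symm (w, a * (1 + w)) ∈ U := ha ((hs _ _).2 (by simp))
      have h2 : L.symm (w, b * (1 + w)) ∈ U := hb ((hs _ _).2 (by simp))
      have h3 := AffineSubspace.vsub_mem_direction h1 h2
      rw [vsub_eq_sub, ← map_sub] at h3
      convert h3 using 2
      ext <;> simp
      ring
    have h0 : ∀ y : K, L.symm (0, y) ∈ U.direction := by
      intro y
      have hz : y / (a - b) ∈ Submodule.span F {(1 : K)} ⊔ P := by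
        rw [hP.sup_eq_top]; trivial
      obtain ⟨c, hc, w, hw, hcw⟩ := Submodule.mem_sup.1 hz
      obtain ⟨t, rfl⟩ := Submodule.mem_span_singleton.1 hc
      have h1 := hd ⟨w, hw⟩
      have h2 := hd 0
      have h3 := U.direction.add_mem (U.direction.sub_mem h1 h2) (U.direction.smul_mem t h2)
      rw [← map_sub, ← map_smul, ← map_add] at h3
      convert h3 using 2
      have hy : y = (a - b) * (t • (1 : K) + w) := by rw [hcw]; field_simp
      ext
      · simp
      · simp only [hy, Algebra.smul_def, Prod.snd_add, Prod.snd_sub, Prod.smul_snd,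
          ZeroMemClass.coe_zero]
        ring
    rw [← AffineSubspace.direction_eq_top_iff_of_nonempty ⟨_, ha (hpt a)⟩, eq_top_iff]
    intro v _
    have h1 : L.symm ((L v).1, a * (1 + (L v).1)) ∈ U := ha ((hs _ _).2 (by simp))
    have h2 := AffineSubspace.vsub_mem_direction h1 (ha (hpt a))
    rw [vsub_eq_sub, ← map_sub] at h2
    have h3 := U.direction.add_mem h2 (h0 ((L v).2 - a * (L v).1))
    rw [← map_add] at h3
    convert h3 using 1
    rw [LinearEquiv.eq_symm_apply]
    ext
    · simp
    · simp
      ring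
  · rw [← Set.image_univ, Set.ncard_image_of_injective _ hinj, Set.ncard_univ]
  · rintro _ ⟨a, rfl⟩
    rw [hdir]
    have hsurj : LinearMap.range (g a) = ⊤ := by
      rw [LinearMap.range_eq_top]
      intro y
      exact ⟨L.symm (0, y), by simp [hg]⟩
    have := LinearMap.finrank_range_add_finrank_ker (g a)
    rw [hsurj, finrank_top, Module.finrank_fin_fun, hk] at this
    omega
  · rintro _ ⟨a, rfl⟩ _ ⟨b, rfl⟩ hab
    rw [Set.disjoint_left]
    intro v hva hvb
    exact hab (by rw [hdisj a b v hva hvb])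

theorem stmt14 (q n : ℕ) (F : Type*) [Field F] [Fintype F] (hq : Fintype.card F = q)
    (hn : Even n) (hn0 : 0 < n) :
    ∃ A : Set (AffineSubspace F (Fin (n - 1) → F)), IsAVSP A ∧ IsTight A ∧
      ¬ IsReducible A ∧ A.ncard = q ^ (n / 2) ∧
      (∀ s ∈ A, Module.finrank F s.direction = n / 2 - 1) ∧
      A.Pairwise fun s t => Disjoint (s : Set (Fin (n - 1) → F)) (t : Set (Fin (n - 1) → F)) := by
  obtain ⟨k, rfl⟩ := hn
  obtain ⟨p, hp⟩ := CharP.exists F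
  have : Fact p.Prime := ⟨CharP.char_is_prime F p⟩
  have : NeZero ((k + k) / 2) := ⟨by omega⟩
  have hfin := FiniteField.finrank_extension F p ((k + k) / 2)
  have : FiniteDimensional F (FiniteField.Extension F p ((k + k) / 2)) :=
    Module.finite_of_finrank_pos (by rw [hfin]; omega)
  have h := stmt14_aux (F := F) (K := FiniteField.Extension F p ((k + k) / 2))
    ((k + k) / 2) (k + k - 1) hfin (by omega)
  rwa [Module.natCard_eq_pow_finrank (K := F), hfin, Nat.card_eq_fintype_card, hq] at h
end

section
/- Let A = {U_1, ..., U_r} be an irreducible tight affine vector space partition of F_2^{n-1} (n ≥ 3) in which U_1 has affine dimension n-3 (projective dimension n-2). Then there exists an irreducible tight affine vector space partition of F_2^{n+1} of size r + 3 containing an element of affine dimension n-1 (projective dimension n). -/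
open scoped Pointwise

abbrev F2 := ZMod 2

lemma f2_add_self {M : Type*} [AddCommGroup M] [Module F2 M] (x : M) : x + x = 0 := by
  have : (2 : F2) • x = 0 := by
    rw [show (2 : F2) = 0 from rfl, zero_smul]
  rwa [two_smul] at this

lemma f2_neg {M : Type*} [AddCommGroup M] [Module F2 M] (x : M) : -x = x :=
  neg_eq_of_add_eq_zero_left (f2_add_self x)

lemma f2_sub {M : Type*} [AddCommGroup M] [Module F2 M] (x y : M) : x - y = x + y := by
  rw [sub_eq_add_neg, f2_neg]

def ofSum {M : Type*} [AddCommGroup M] [Module F2 M] (s : Set M)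
    (h : ∀ x ∈ s, ∀ y ∈ s, ∀ z ∈ s, x + y + z ∈ s) : AffineSubspace F2 M where
  carrier := s
  smul_vsub_vadd_mem' := by
    intro c x y z hx hy hz
    have hc : c = 0 ∨ c = 1 := by revert c; decide
    rcases hc with rfl | rfl
    · simpa using hz
    · simpa [f2_sub] using h x hx y hy z hz

lemma mem_ofSum {M : Type*} [AddCommGroup M] [Module F2 M] (s : Set M)
    (h : ∀ x ∈ s, ∀ y ∈ s, ∀ z ∈ s, x + y + z ∈ s) (x : M) : x ∈ ofSum s h ↔ x ∈ s := Iff.rfl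

lemma aff3_mem {M : Type*} [AddCommGroup M] [Module F2 M] (U : AffineSubspace F2 M)
    {x y z : M} (hx : x ∈ U) (hy : y ∈ U) (hz : z ∈ U) : x + y + z ∈ U := by
  have := U.smul_vsub_vadd_mem 1 hx hy hz
  simpa [f2_sub] using this

/-- The label of the line of the 4-line partition of `F_2^3`. -/
def lab (x : (F2 × F2) × F2) : Fin 4 :=
  if x.1 = 0 then 0
  else if x.1.1 + x.1.2 = 1 ∧ x.2 = x.1.2 then 1
  else if x.1.2 = 1 ∧ x.2 = 0 then 2 else 3

lemma lab_sum : ∀ x y z, lab y = lab x → lab z = lab x → lab (x + y + z) = lab x := by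
  decide +kernel

lemma lab_span : ∀ i j : Fin 4, i ≠ j → ∀ x, ∃ p q r, (lab p = i ∨ lab p = j) ∧
    (lab q = i ∨ lab q = j) ∧ (lab r = i ∨ lab r = j) ∧ x = p + q + r := by
  decide +kernel

lemma lab_e : ∀ x, lab x ≠ 0 → lab (x + (0, 1)) ≠ lab x := by decide +kernel

lemma lab_surj : ∀ i, ∃ x, lab x = i := by decide +kernel

lemma lab_zero : ∀ x, lab x = 0 ↔ x.1 = 0 := by decide +kernel

lemma lab_inv : ∀ d : (F2 × F2) × F2, (∀ x, lab (d + x) = lab x) → d = 0 := by decide +kernel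

section Constr
variable {V W : Type*} [AddCommGroup V] [Module F2 V] [AddCommGroup W] [Module F2 W]
  (φ : W ≃ₗ[F2] V × F2 × F2) (g : V → F2 × F2)

def CC (u : AffineSubspace F2 V) : AffineSubspace F2 W :=
  ofSum {w | (φ w).2.2 = 0 ∧ (φ w).1 ∈ u} (by
    rintro x ⟨hx, hx'⟩ y ⟨hy, hy'⟩ z ⟨hz, hz'⟩
    refine ⟨by simp [hx, hy, hz], ?_⟩
    simpa using aff3_mem u hx' hy' hz')

def co (w : W) : (F2 × F2) × F2 := (g (φ w).1, (φ w).2.1)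

lemma co_sum (hg : ∀ x y z, g (x + y + z) = g x + g y + g z) (x y z : W) : co φ g (x + y + z) = co φ g x + co φ g y + co φ g z := by
  simp [co, hg]

def KK (hg : ∀ x y z, g (x + y + z) = g x + g y + g z) (i : Fin 4) : AffineSubspace F2 W :=
  ofSum {w | lab (co φ g w) = i ∧ (i = 0 ∨ (φ w).2.2 = 1)} (by
    rintro x ⟨hx, hx'⟩ y ⟨hy, hy'⟩ z ⟨hz, hz'⟩
    refine ⟨?_, ?_⟩
    · rw [co_sum φ g hg, lab_sum _ _ _ (hy.trans hx.symm) (hz.trans hx.symm), hx]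
    · by_cases h : i = 0
      · exact Or.inl h
      · right
        simp only [h, false_or] at hx' hy' hz'
        simp only [map_add, Prod.snd_add, hx', hy', hz']
        decide)

lemma mem_CC (u : AffineSubspace F2 V) (w : W) :
    w ∈ CC φ u ↔ (φ w).2.2 = 0 ∧ (φ w).1 ∈ u := Iff.rfl

lemma mem_KK (hg : ∀ x y z, g (x + y + z) = g x + g y + g z) (i : Fin 4) (w : W) :
    w ∈ KK φ g hg i ↔ lab (co φ g w) = i ∧ (i = 0 ∨ (φ w).2.2 = 1) := Iff.rfl

lemma f2_cases (c : F2) : c = 0 ∨ c = 1 := by revert c; decide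

end Constr

lemma key {k m : ℕ} (A : Set (AffineSubspace F2 (Fin k → F2)))
    (hA : IsAVSP A) (ht : IsTight A) (hirr : ¬ IsReducible A)
    (U₁ : AffineSubspace F2 (Fin k → F2)) (hU₁ : U₁ ∈ A)
    (φ : (Fin m → F2) ≃ₗ[F2] (Fin k → F2) × F2 × F2) (g : (Fin k → F2) → F2 × F2)
    (hg : ∀ x y z, g (x + y + z) = g x + g y + g z) (hs : Function.Surjective g)
    (hgU : ∀ x, x ∈ U₁ ↔ g x = 0) :
    ∃ A' : Set (AffineSubspace F2 (Fin m → F2)),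
      IsAVSP A' ∧ IsTight A' ∧ ¬ IsReducible A' ∧ A'.ncard = A.ncard + 3 ∧
        KK φ g hg 0 ∈ A' := by
  classical
  obtain ⟨hA1, hA2, hA3⟩ := hA
  -- points with given coordinates
  have hpt : ∀ x t, ∃ w, co φ g w = x ∧ (φ w).2.2 = t := by
    rintro ⟨x, y⟩ t
    obtain ⟨v, rfl⟩ := hs x
    exact ⟨φ.symm (v, y, t), by simp [co], by simp⟩
  have hK1 : ∀ i, ∃ w ∈ KK φ g hg i, (φ w).2.2 = 1 := by
    intro i
    obtain ⟨x, hx⟩ := lab_surj i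
    obtain ⟨w, hw, hw'⟩ := hpt x 1
    exact ⟨w, ⟨by rw [hw, hx], Or.inr hw'⟩, hw'⟩
  have hCK : ∀ u i, CC φ u ≠ KK φ g hg i := by
    intro u i h
    obtain ⟨w, hw, hw'⟩ := hK1 i
    rw [← h] at hw
    have := hw.1
    rw [hw'] at this
    exact absurd this (by decide)
  have hKinj : ∀ i j, KK φ g hg i = KK φ g hg j → i = j := by
    intro i j h
    obtain ⟨w, hw, hw'⟩ := hK1 i
    have h2 := hw.1
    rw [h] at hw
    exact h2.symm.trans hw.1
  have hCinj : ∀ u u' : AffineSubspace F2 (Fin k → F2), CC φ u = CC φ u' → u = u' := by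
    intro u u' h
    ext v
    have : φ.symm (v, 0, 0) ∈ CC φ u ↔ φ.symm (v, 0, 0) ∈ CC φ u' := by rw [h]
    simpa [mem_CC] using this
  have hlU : ∀ w, lab (co φ g w) = 0 ↔ (φ w).1 ∈ U₁ := by
    intro w
    rw [lab_zero, hgU, co]
  have hdisj : ∀ u ∈ A, ∀ u' ∈ A, ∀ v, v ∈ u → v ∈ u' → u = u' := by
    intro u hu u' hu' v hv hv'
    exact (hA3 v).unique ⟨hu, hv⟩ ⟨hu', hv'⟩
  obtain ⟨p, hp⟩ := hA2 U₁ hU₁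
  have hp : p ∈ U₁ := hp
  have h01 : (0 : F2) ≠ 1 := by decide
  -- a second element
  obtain ⟨u₂, hu₂, hu₂'⟩ : ∃ u ∈ A, u ≠ U₁ := by
    obtain ⟨v, hv⟩ := hs (1, 1)
    obtain ⟨u, ⟨hu, hvu⟩, -⟩ := hA3 v
    refine ⟨u, hu, ?_⟩
    rintro rfl
    rw [hgU, hv] at hvu
    exact absurd hvu (by decide)
  set A' : Set (AffineSubspace F2 (Fin m → F2)) :=
    (CC φ '' (A \ {U₁})) ∪ Set.range (KK φ g hg) with hA'
  have hCm : ∀ u ∈ A, u ≠ U₁ → CC φ u ∈ A' := fun u hu hne =>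
    Or.inl ⟨u, ⟨hu, hne⟩, rfl⟩
  have hKm : ∀ i, KK φ g hg i ∈ A' := fun i => Or.inr ⟨i, rfl⟩
  have hA'3 : ∀ x, ∃! s, s ∈ A' ∧ x ∈ s := by
    intro w
    have huq : ∀ s ∈ A', ∀ s' ∈ A', w ∈ s → w ∈ s' → s = s' := by
      have hx : ∀ u ∈ A, u ≠ U₁ → ∀ i, w ∈ CC φ u → w ∈ KK φ g hg i → False := by
        rintro u hu hne i ⟨h1, h2⟩ ⟨h3, h4⟩
        rw [h1] at h4
        have hi : i = 0 := h4.resolve_right h01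
        subst hi
        exact hne (hdisj u hu U₁ hU₁ _ h2 ((hlU w).1 h3))
      rintro s (⟨u, ⟨hu, hne⟩, rfl⟩ | ⟨i, rfl⟩) s' (⟨u', ⟨hu', hne'⟩, rfl⟩ | ⟨j, rfl⟩) h h'
      · rw [hdisj u hu u' hu' _ h.2 h'.2]
      · exact (hx u hu hne j h h').elim
      · exact (hx u' hu' hne' i h' h).elim
      · rw [← h.1, ← h'.1]
    have hex : ∃ s ∈ A', w ∈ s := by
      by_cases h0 : lab (co φ g w) = 0
      · exact ⟨_, hKm 0, h0, Or.inl rfl⟩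
      · rcases f2_cases (φ w).2.2 with h | h
        · obtain ⟨u, ⟨hu, hwu⟩, -⟩ := hA3 (φ w).1
          refine ⟨CC φ u, hCm u hu ?_, h, hwu⟩
          rintro rfl
          exact h0 ((hlU w).2 hwu)
        · exact ⟨_, hKm (lab (co φ g w)), rfl, Or.inr h⟩
    obtain ⟨s, hs1, hs2⟩ := hex
    exact ⟨s, ⟨hs1, hs2⟩, fun s' h => huq _ h.1 _ hs1 h.2 hs2⟩
  refine ⟨A', ⟨?_, ?_, hA'3⟩, ?_, ?_, ?_, hKm 0⟩
  · rintro s (⟨u, ⟨hu, hne⟩, rfl⟩ | ⟨i, rfl⟩) h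
    · have : φ.symm (0, 0, 1) ∈ CC φ u := by rw [h]; trivial
      simp [mem_CC] at this
    · obtain ⟨w, hw, hw'⟩ := hK1 (i + 1)
      have h2 : w ∈ KK φ g hg i := by rw [h]; trivial
      have := h2.1.symm.trans hw.1
      revert this
      clear * -
      revert i
      decide
  · rintro s (⟨u, ⟨hu, hne⟩, rfl⟩ | ⟨i, rfl⟩)
    · obtain ⟨v, hv⟩ := hA2 u hu
      exact ⟨φ.symm (v, 0, 0), by
        change _ ∈ CC φ u
        simpa [mem_CC] using hv⟩
    · obtain ⟨w, hw, -⟩ := hK1 i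
      exact ⟨w, hw⟩
  · -- tight
    intro x hx
    by_contra hcon
    push Not at hcon
    have hinv : ∀ s ∈ A', ∀ w ∈ s, x + w ∈ s := by
      intro s hsA w hw
      have : x +ᵥ w ∈ x +ᵥ (s : Set (Fin m → F2)) := Set.vadd_mem_vadd_set hw
      rw [hcon s hsA] at this
      exact this
    have hxt : (φ x).2.2 = 0 := by
      obtain ⟨v, hv⟩ := hA2 u₂ hu₂
      have := (hinv _ (hCm u₂ hu₂ hu₂') (φ.symm (v, 0, 0)) (by simpa [mem_CC] using hv)).1
      simpa using this
    have hco : ∀ w, co φ g (x + w) = (g (φ x).1 + g 0, (φ x).2.1) + co φ g w := by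
      intro w
      have := co_sum φ g hg x 0 w
      rw [add_zero] at this
      rw [this]
      congr 1
      simp [co]
    have hd := lab_inv (g (φ x).1 + g 0, (φ x).2.1) (by
      intro y
      obtain ⟨w, hw, hw'⟩ := hpt y 1
      have := (hinv _ (hKm (lab y)) w ⟨by rw [hw], Or.inr hw'⟩).1
      rwa [hco, hw] at this)
    have hd1 : g (φ x).1 + g 0 = 0 := congrArg Prod.fst hd
    have hd2 : (φ x).2.1 = 0 := congrArg Prod.snd hd
    have hx1 : (φ x).1 ≠ 0 := by
      intro h
      apply hx
      apply φ.injective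
      rw [map_zero]
      exact Prod.ext h (Prod.ext hd2 hxt)
    obtain ⟨u, hu, hne⟩ := ht _ hx1
    apply hne
    have hsub : ∀ v ∈ u, (φ x).1 + v ∈ u := by
      intro v hv
      by_cases h : u = U₁
      · subst h
        rw [hgU] at hv ⊢
        have := hg (φ x).1 0 v
        rw [hv, add_zero, hd1, add_zero] at this
        exact this
      · have := (hinv _ (hCm u hu h) (φ.symm (v, 0, 0)) (by simpa [mem_CC] using hv)).2
        simpa using this
    apply Set.Subset.antisymm
    · rintro _ ⟨v, hv, rfl⟩
      exact hsub v hv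
    · intro v hv
      refine ⟨(φ x).1 + v, hsub v hv, ?_⟩
      simp only [vadd_eq_add]
      rw [← add_assoc, f2_add_self, zero_add]
  · -- irreducible
    rintro ⟨U, hU, S, hSA, hS1, hSU, hUS⟩
    have htop : (∀ w, (φ w).2.2 = 0 → w ∈ U) → (∀ w, (φ w).2.2 = 1 → w ∈ U) → False := by
      intro h0 h1
      apply hU
      ext w
      simp only [AffineSubspace.mem_top, iff_true]
      rcases f2_cases (φ w).2.2 with h | h
      · exact h0 w h
      · exact h1 w h
    have hup : ∀ c d : F2, c ≠ d → (∀ w, (φ w).2.2 = c → w ∈ U) →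
        (∃ w ∈ U, (φ w).2.2 = d) → ∀ w, (φ w).2.2 = d → w ∈ U := by
      rintro c d hcd h0 ⟨w, hw, hw1⟩ w' hw'
      have ha : φ.symm (0, 0, c) ∈ U := h0 _ (by simp)
      have hb : w' + w + φ.symm (0, 0, c) ∈ U := h0 _ (by
        simp [hw1, hw', f2_add_self])
      have := aff3_mem U hb hw ha
      convert this using 1
      have e1 := f2_add_self w
      have e2 := f2_add_self (φ.symm (0, 0, c))
      calc w' = w' + (w + w) + (φ.symm (0, 0, c) + φ.symm (0, 0, c)) := by rw [e1, e2]; simp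
        _ = _ := by abel
    have hE : ∀ w ∈ U, (φ w).1 ∈ U₁ → KK φ g hg 0 ∈ S := by
      intro w hw hwU
      obtain ⟨s, ⟨hsS, hws⟩, -⟩ := hUS w hw
      have : s = KK φ g hg 0 := (hA'3 w).unique ⟨hSA hsS, hws⟩ ⟨hKm 0, (hlU w).2 hwU, Or.inl rfl⟩
      rwa [← this]
    have hEp : ∀ t, φ.symm (p, 0, t) ∈ KK φ g hg 0 := by
      intro t
      exact ⟨(hlU _).2 (by simpa using hp), Or.inl rfl⟩
    -- two distinct K elements
    have hKK : ∀ i j, i ≠ j → KK φ g hg i ∈ S → KK φ g hg j ∈ S → False := by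
      intro i j hij hi hj
      have hl : ∀ w, (φ w).2.2 = 1 → (lab (co φ g w) = i ∨ lab (co φ g w) = j) → w ∈ U := by
        rintro w hw (h | h)
        · exact hSU _ hi ⟨h, Or.inr hw⟩
        · exact hSU _ hj ⟨h, Or.inr hw⟩
      have h1 : ∀ w, (φ w).2.2 = 1 → w ∈ U := by
        intro w hw
        obtain ⟨a, b, c, ha, hb, hc, he⟩ := lab_span i j hij (co φ g w)
        obtain ⟨x, hx, hx'⟩ := hpt a 1
        obtain ⟨y, hy, hy'⟩ := hpt b 1
        have hcc : co φ g (w + x + y) = c := by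
          rw [co_sum φ g hg, hx, hy, he]
          calc a + b + c + a + b = (a + a) + (b + b) + c := by abel
            _ = c := by rw [f2_add_self, f2_add_self]; simp
        have hz : w + x + y ∈ U := by
          apply hl
          · simp only [map_add, Prod.snd_add, hw, hx', hy']
            decide
          · rwa [hcc]
        have := aff3_mem U hz (hl x hx' (by rwa [hx])) (hl y hy' (by rwa [hy]))
        convert this using 1
        calc w = w + (x + x) + (y + y) := by rw [f2_add_self, f2_add_self]; simp
          _ = _ := by abel
      have hES := hE (φ.symm (p, 0, 1)) (h1 _ (by simp)) (by simpa using hp)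
      exact htop (hup 1 0 h01.symm h1 ⟨_, hSU _ hES (hEp 0), by simp⟩) h1
    -- two distinct elements below
    have hAA : ∀ u ∈ A, ∀ u' ∈ A, u ≠ u' → CC φ u ≤ U → CC φ u' ≤ U → False := by
      intro u hu u' hu' hne huU huU'
      let U' : AffineSubspace F2 (Fin k → F2) := ofSum {v | φ.symm (v, 0, 0) ∈ U} (by
        intro x hx y hy z hz
        have := aff3_mem U hx hy hz
        rw [← map_add, ← map_add] at this
        simpa using this)
      have hcyl : ∀ w ∈ U, (φ w).2.2 = 0 → ∃ u ∈ A, (φ w).1 ∈ u ∧ CC φ u ≤ U := by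
        intro w hw hw0
        obtain ⟨s, ⟨hsS, hws⟩, -⟩ := hUS w hw
        rcases hSA hsS with ⟨u, ⟨hu, hne⟩, rfl⟩ | ⟨i, rfl⟩
        · exact ⟨u, hu, hws.2, hSU _ hsS⟩
        · have hi : i = 0 := by
            have := hws.2
            rw [hw0] at this
            exact this.resolve_right h01
          subst hi
          refine ⟨U₁, hU₁, (hlU w).1 hws.1, ?_⟩
          intro w' hw'
          exact hSU _ hsS ⟨(hlU w').2 hw'.2, Or.inl rfl⟩
      have hmem : ∀ v, v ∈ U' ↔ φ.symm (v, 0, 0) ∈ U := fun v => Iff.rfl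
      have hle : ∀ u, CC φ u ≤ U → u ≤ U' := by
        intro u h v hv
        rw [hmem]
        apply h
        simpa [mem_CC] using hv
      have hU'top : U' = ⊤ := by
        by_contra hU'
        apply hirr
        refine ⟨U', hU', {u | u ∈ A ∧ u ≤ U'}, fun u h => h.1, ?_, fun u h => h.2, ?_⟩
        · rw [Set.one_lt_ncard (Set.toFinite _)]
          exact ⟨u, ⟨hu, hle u huU⟩, u', ⟨hu', hle u' huU'⟩, hne⟩
        · intro v hv
          obtain ⟨u, hu, hvu, hCu⟩ := hcyl _ ((hmem v).1 hv) (by simp)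
          refine ⟨u, ⟨⟨hu, hle u hCu⟩, by simpa using hvu⟩, ?_⟩
          rintro u' ⟨⟨hu', -⟩, hv'⟩
          exact hdisj u' hu' u hu v hv' (by simpa using hvu)
      have h0 : ∀ w, (φ w).2.2 = 0 → w ∈ U := by
        intro w hw
        have : (φ w).1 ∈ U' := by rw [hU'top]; trivial
        obtain ⟨u, hu, hvu, hCu⟩ := hcyl _ ((hmem _).1 this) (by simp)
        exact hCu ⟨hw, by simpa using hvu⟩
      have hES := hE (φ.symm (p, 0, 0)) (h0 _ (by simp)) (by simpa using hp)
      exact htop h0 (hup 0 1 h01 h0 ⟨_, hSU _ hES (hEp 1), by simp⟩)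
    have hmix : ∀ u ∈ A, u ≠ U₁ → ∀ i, CC φ u ∈ S → KK φ g hg i ∈ S → False := by
      intro u hu hne i huS hiS
      by_cases hi : i = 0
      · subst hi
        refine hAA u hu U₁ hU₁ hne (hSU _ huS) ?_
        intro w hw
        exact hSU _ hiS ⟨(hlU w).2 hw.2, Or.inl rfl⟩
      · obtain ⟨v, hv⟩ := hA2 u hu
        obtain ⟨w, hw, hw1⟩ := hK1 i
        have ha : φ.symm (v, 0, 0) ∈ U := hSU _ huS (by simpa [mem_CC] using hv)
        have hb : φ.symm (v, 1, 0) ∈ U := hSU _ huS (by simpa [mem_CC] using hv)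
        have hc := aff3_mem U ha hb (hSU _ hiS hw)
        have he : φ (φ.symm (v, 0, 0) + φ.symm (v, 1, 0) + w) = ((φ w).1, (φ w).2.1 + 1, 1) := by
          rw [map_add, map_add, LinearEquiv.apply_symm_apply, LinearEquiv.apply_symm_apply]
          refine Prod.ext ?_ (Prod.ext ?_ ?_)
          · simp [f2_add_self]
          · simp [add_comm]
          · simp [hw1]
        obtain ⟨s, ⟨hsS, hws⟩, -⟩ := hUS _ hc
        rcases hSA hsS with ⟨u', ⟨hu', hne'⟩, rfl⟩ | ⟨j, rfl⟩
        · have := hws.1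
          rw [he] at this
          exact h01 this.symm
        · refine hKK j i ?_ hsS hiS
          rintro rfl
          have h1 := hws.1
          have h2 := hw.1
          have h3 : co φ g (φ.symm (v, 0, 0) + φ.symm (v, 1, 0) + w) = co φ g w + (0, 1) := by
            rw [co, he]; simp [co]
          rw [h3] at h1
          exact lab_e (co φ g w) (by rw [h2]; exact hi) (h1.trans h2.symm)
    rw [Set.one_lt_ncard (Set.toFinite _)] at hS1
    obtain ⟨s, hs1, s', hs2, hss⟩ := hS1
    rcases hSA hs1 with ⟨u, ⟨hu, hne⟩, rfl⟩ | ⟨i, rfl⟩ <;>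
      rcases hSA hs2 with ⟨u', ⟨hu', hne'⟩, rfl⟩ | ⟨j, rfl⟩
    · exact hAA u hu u' hu' (fun h => hss (by rw [h])) (hSU _ hs1) (hSU _ hs2)
    · exact hmix u hu hne j hs1 hs2
    · exact hmix u' hu' hne' i hs2 hs1
    · exact hKK i j (fun h => hss (by rw [h])) hs1 hs2
  · rw [hA', Set.ncard_union_eq _ (Set.toFinite _) (Set.toFinite _),
      Set.ncard_image_of_injective _ (fun u u' h => hCinj u u' h)]
    · have h1 := Set.ncard_sdiff_singleton_add_one hU₁ (Set.toFinite _)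
      have h2 : (Set.range (KK φ g hg)).ncard = 4 := by
        rw [← Set.image_univ, Set.ncard_image_of_injective _ (fun i j h => hKinj i j h)]
        simp
      omega
    · rw [Set.disjoint_left]
      rintro _ ⟨u, -, rfl⟩ ⟨i, h⟩
      exact hCK u i h.symm

theorem stmt16 (n : ℕ) (hn : 3 ≤ n)
    (A : Set (AffineSubspace (ZMod 2) (Fin (n - 1) → ZMod 2)))
    (hA : IsAVSP A) (ht : IsTight A) (hirr : ¬ IsReducible A)
    (U₁ : AffineSubspace (ZMod 2) (Fin (n - 1) → ZMod 2)) (hU₁ : U₁ ∈ A)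
    (hd : Module.finrank (ZMod 2) U₁.direction = n - 3) :
    ∃ A' : Set (AffineSubspace (ZMod 2) (Fin (n + 1) → ZMod 2)),
      IsAVSP A' ∧ IsTight A' ∧ ¬ IsReducible A' ∧ A'.ncard = A.ncard + 3 ∧
      ∃ s ∈ A', Module.finrank (ZMod 2) s.direction = n - 1 := by
  have hfV : Module.finrank (ZMod 2) (Fin (n - 1) → ZMod 2) = n - 1 := by simp
  have hfW : Module.finrank (ZMod 2) (Fin (n + 1) → ZMod 2) = n + 1 := by simp
  let φ : (Fin (n + 1) → F2) ≃ₗ[F2] (Fin (n - 1) → F2) × F2 × F2 :=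
    LinearEquiv.ofFinrankEq _ _ (by
      rw [hfW, Module.finrank_prod, Module.finrank_prod, hfV, Module.finrank_self]; omega)
  have hquot := Submodule.finrank_quotient_add_finrank U₁.direction
  rw [hd, hfV] at hquot
  have hq2 : Module.finrank (ZMod 2) ((Fin (n - 1) → ZMod 2) ⧸ U₁.direction) = 2 := by omega
  let ψ : ((Fin (n - 1) → F2) ⧸ U₁.direction) ≃ₗ[F2] F2 × F2 :=
    LinearEquiv.ofFinrankEq _ _ (by
      rw [Module.finrank_prod, Module.finrank_self]; exact hq2)
  let q : (Fin (n - 1) → F2) →ₗ[F2] F2 × F2 := ψ.toLinearMap ∘ₗ U₁.direction.mkQ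
  have hqs : Function.Surjective q := ψ.surjective.comp (Submodule.mkQ_surjective _)
  have hqk : ∀ v, q v = 0 ↔ v ∈ U₁.direction := by
    intro v
    simp [q]
  obtain ⟨p, hp⟩ := hA.2.1 U₁ hU₁
  have hg : ∀ x y z, q (x + y + z - p) = q (x - p) + q (y - p) + q (z - p) := by
    intro x y z
    rw [← map_add, ← map_add]
    congr 1
    have : p + p = 0 := f2_add_self p
    calc x + y + z - p = x + y + z - p - (p + p) := by rw [this, sub_zero]
      _ = _ := by abel
  obtain ⟨A', h1, h2, h3, h4, h5⟩ := key A hA ht hirr U₁ hU₁ φ (fun v => q (v - p)) hg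
    (fun x => by
      obtain ⟨v, hv⟩ := hqs x
      exact ⟨v + p, by simpa using hv⟩)
    (fun x => by
      rw [hqk, ← vsub_eq_sub, AffineSubspace.vsub_right_mem_direction_iff_mem hp])
  refine ⟨A', h1, h2, h3, h4, _, h5, ?_⟩
  let r : (Fin (n + 1) → F2) →ₗ[F2] F2 × F2 := q ∘ₗ LinearMap.fst F2 _ _ ∘ₗ φ.toLinearMap
  have hrs : Function.Surjective r :=
    hqs.comp (Prod.fst_surjective.comp φ.surjective)
  have hE : KK φ (fun v => q (v - p)) hg 0 =
      AffineSubspace.mk' (φ.symm (p, 0, 0)) (LinearMap.ker r) := by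
    ext w
    rw [mem_KK, AffineSubspace.mem_mk', LinearMap.mem_ker, lab_zero]
    simp [co, r]
  rw [hE, AffineSubspace.direction_mk']
  have hrk := LinearMap.finrank_range_add_finrank_ker r
  rw [LinearMap.range_eq_top.2 hrs, finrank_top, Module.finrank_prod, Module.finrank_self, hfW]
    at hrk
  have hfin : Module.finrank F2 (LinearMap.ker r) = n - 1 := by omega
  exact hfin
end

section
/- For each integer n ≥ 4 there exists an irreducible tight affine vector space partition of F_2^{n-1} of size ⌊(3n-3)/2⌋. -/
open scoped Pointwise

/-- A set in an elementary abelian 2-group closed under `x + y + z`, i.e. empty or an affine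
subspace. -/
def Flat {V : Type*} [Add V] (U : Set V) : Prop :=
  ∀ x ∈ U, ∀ y ∈ U, ∀ z ∈ U, x + y + z ∈ U

/-- The fibres of the colouring `col` form a tight irreducible affine partition. -/
structure Good {V : Type*} [AddCommGroup V] {I : Type*} (col : V → I) : Prop where
  surj : Function.Surjective col
  nontriv : ∃ i j : I, i ≠ j
  flat : ∀ x y z, col y = col x → col z = col x → col (x + y + z) = col x
  tight : ∀ v, (∀ x, col (v + x) = col x) → v = 0
  irr : ∀ S : Set I, Flat (col ⁻¹' S) → (∀ i ∈ S, ∀ j ∈ S, i = j) ∨ S = Set.univ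

/-- Two distinct fibres `s = a ∪ (a + p)` and `t = a + q`. -/
def HasPair {V : Type*} [AddCommGroup V] {I : Type*} (col : V → I) : Prop :=
  ∃ (s t : I) (a : Set V) (p q : V), s ≠ t ∧ a.Nonempty ∧ Flat a ∧
    (∀ x, col x = s ↔ (x ∈ a ∨ x + p ∈ a)) ∧ (∀ x, ¬ (x ∈ a ∧ x + p ∈ a)) ∧
    (∀ x, col x = t ↔ x + q ∈ a)

lemma Good.comp {V W : Type*} [AddCommGroup V] [AddCommGroup W] {I : Type*} {col : V → I}
    (h : Good col) (e : W ≃+ V) : Good (fun w => col (e w)) := by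
  refine ⟨h.surj.comp e.surjective, h.nontriv, ?_, ?_, ?_⟩
  · intro x y z hy hz
    simpa using h.flat (e x) (e y) (e z) hy hz
  · intro v hv
    have : e v = 0 := h.tight _ fun x => by
      have := hv (e.symm x)
      simpa using this
    simpa using this
  · intro S hS
    apply h.irr S
    intro x hx y hy z hz
    have := hS (e.symm x) (by simpa using hx) (e.symm y) (by simpa using hy)
      (e.symm z) (by simpa using hz)
    simpa using this

lemma HasPair.comp {V W : Type*} [AddCommGroup V] [AddCommGroup W] {I : Type*} {col : V → I}
    (h : HasPair col) (e : W ≃+ V) : HasPair (fun w => col (e w)) := by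
  obtain ⟨s, t, a, p, q, hst, ⟨x, hx⟩, hf, h1, h2, h3⟩ := h
  refine ⟨s, t, e ⁻¹' a, e.symm p, e.symm q, hst, ⟨e.symm x, by simpa using hx⟩, ?_, ?_, ?_, ?_⟩
  · intro x hx y hy z hz
    simpa using hf _ hx _ hy _ hz
  · intro x
    simpa using h1 (e x)
  · intro x
    simpa using h2 (e x)
  · intro x
    simpa using h3 (e x)

section step
variable {V : Type*} [AddCommGroup V] {I : Type*}

open Classical in
/-- The colouring of `V × F_2 × F_2` in the recursion. -/
noncomputable def stepCol (col : V → I) (s t : I) (a : Set V) :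
    V × ZMod 2 × ZMod 2 → I ⊕ Fin 3 := fun x =>
  if col x.1 = s then
    if x.2.2 = 0 then Sum.inl s
    else if x.1 ∈ a then Sum.inr 0
    else if x.2.1 = 0 then Sum.inr 1 else Sum.inr 2
  else if col x.1 = t then
    if x.2.1 = 1 then Sum.inl t
    else if x.2.2 = 0 then Sum.inr 1 else Sum.inr 2
  else Sum.inl (col x.1)

lemma z2 (i : ZMod 2) : i = 0 ∨ i = 1 := by
  revert i; decide

set_option linter.unusedSimpArgs false in
set_option maxHeartbeats 2000000 in
lemma step_good (hV : ∀ v : V, v + v = 0) {col : V → I} (h : Good col) {s t : I} {a : Set V}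
    {p q : V} (hst : s ≠ t) (hne : a.Nonempty) (hf : Flat a)
    (h1 : ∀ x, col x = s ↔ (x ∈ a ∨ x + p ∈ a)) (h2 : ∀ x, ¬ (x ∈ a ∧ x + p ∈ a))
    (h3 : ∀ x, col x = t ↔ x + q ∈ a) :
    Good (stepCol col s t a) ∧ HasPair (stepCol col s t a) := by
  obtain ⟨α, hα⟩ := hne
  have hcan : ∀ x y : V, x + y + y = x := fun x y => by rw [add_assoc, hV, add_zero]
  have h10 : (1 : ZMod 2) ≠ 0 := by decide
  have h01 : (0 : ZMod 2) ≠ 1 := by decide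
  have h11 : (1 : ZMod 2) + 1 = 0 := by decide
  -- colours of the representative columns
  have ca : ∀ x, x ∈ a → col x = s := fun x hx => (h1 x).2 (Or.inl hx)
  have cb : ∀ x, x + p ∈ a → col x = s := fun x hx => (h1 x).2 (Or.inr hx)
  have cb' : ∀ x, x + p ∈ a → x ∉ a := fun x hx hx' => h2 x ⟨hx', hx⟩
  have cc : ∀ x, x + q ∈ a → col x = t := fun x hx => (h3 x).2 hx
  have ct : ∀ x, col x = t → col x ≠ s := fun x hx hx' => hst (hx'.symm.trans hx)
  -- characterisation of the classes
  have eO : ∀ x i j, col x ≠ s → col x ≠ t → stepCol col s t a (x, i, j) = Sum.inl (col x) := by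
    intro x i j hs ht; simp [stepCol, hs, ht]
  have eQ : ∀ x i, col x = s → stepCol col s t a (x, i, 0) = Sum.inl s := by
    intro x i hs; simp [stepCol, hs]
  have eP : ∀ x i, x ∈ a → stepCol col s t a (x, i, 1) = Sum.inr 0 := by
    intro x i hs; simp [stepCol, ca x hs, hs]
  have eR0b : ∀ x, x + p ∈ a → stepCol col s t a (x, 0, 1) = Sum.inr 1 := by
    intro x hs; simp [stepCol, cb x hs, cb' x hs]
  have eR1b : ∀ x, x + p ∈ a → stepCol col s t a (x, 1, 1) = Sum.inr 2 := by
    intro x hs; simp [stepCol, cb x hs, cb' x hs]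
  have eR0c : ∀ x, col x = t → stepCol col s t a (x, 0, 0) = Sum.inr 1 := by
    intro x hs; simp [stepCol, ct x hs, hs, hst.symm]
  have eR1c : ∀ x, col x = t → stepCol col s t a (x, 0, 1) = Sum.inr 2 := by
    intro x hs; simp [stepCol, ct x hs, hs, hst.symm]
  have eC : ∀ x j, col x = t → stepCol col s t a (x, 1, j) = Sum.inl t := by
    intro x j hs; simp [stepCol, ct x hs, hs, hst.symm]
  have e10 : ∀ x, stepCol col s t a (x, 1, 0) = Sum.inl (col x) := by
    intro x
    by_cases hs : col x = s
    · rw [eQ _ _ hs, hs]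
    by_cases ht : col x = t
    · rw [eC _ _ ht, ht]
    exact eO _ _ _ hs ht
  -- every point falls in one of the classes
  have hcases : ∀ (x : V) (i j : ZMod 2), (col x ≠ s ∧ col x ≠ t) ∨ (col x = s ∧ j = 0) ∨ (x ∈ a ∧ j = 1) ∨
      (x + p ∈ a ∧ i = 0 ∧ j = 1) ∨ (x + p ∈ a ∧ i = 1 ∧ j = 1) ∨
      (col x = t ∧ i = 0 ∧ j = 0) ∨ (col x = t ∧ i = 0 ∧ j = 1) ∨ (col x = t ∧ i = 1) := by
    intro x i j
    by_cases hs : col x = s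
    · rcases z2 j with rfl | rfl
      · tauto
      · rcases (h1 x).1 hs with h | h <;> rcases z2 i with rfl | rfl <;> tauto
    · by_cases ht : col x = t
      · rcases z2 i with rfl | rfl <;> rcases z2 j with rfl | rfl <;> tauto
      · tauto
  have cO : ∀ x i j k, k ≠ s → k ≠ t →
      (stepCol col s t a (x, i, j) = Sum.inl k ↔ col x = k) := by
    intro x i j k hs ht
    rcases hcases x i j with h | ⟨h, rfl⟩ | ⟨h, rfl⟩ | ⟨h, rfl, rfl⟩ | ⟨h, rfl, rfl⟩ |
      ⟨h, rfl, rfl⟩ | ⟨h, rfl, rfl⟩ | ⟨h, rfl⟩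
    · rw [eO _ _ _ h.1 h.2]; simp
    · rw [eQ _ _ h, h]; simp
    · rw [eP _ _ h, ca _ h]; simp [hs.symm]
    · rw [eR0b _ h, cb _ h]; simp [hs.symm]
    · rw [eR1b _ h, cb _ h]; simp [hs.symm]
    · rw [eR0c _ h, h]; simp [ht.symm]
    · rw [eR1c _ h, h]; simp [ht.symm]
    · rw [eC _ _ h, h]; simp
  have cQ : ∀ x i j, stepCol col s t a (x, i, j) = Sum.inl s ↔ (col x = s ∧ j = 0) := by
    intro x i j
    have hb : x + p ∈ a ↔ (col x = s ∧ x ∉ a) :=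
      ⟨fun h => ⟨cb x h, cb' x h⟩, fun h => ((h1 x).1 h.1).resolve_left h.2⟩
    have ha : col x ≠ s → x ∉ a := fun h h' => h (ca x h')
    rcases hcases x i j with h | ⟨h, rfl⟩ | ⟨h, rfl⟩ | ⟨h, rfl, rfl⟩ | ⟨h, rfl, rfl⟩ |
      ⟨h, rfl, rfl⟩ | ⟨h, rfl, rfl⟩ | ⟨h, rfl⟩
    · rw [eO _ _ _ h.1 h.2]; simp [h.1, h.2, ha h.1, hb]
    · rw [eQ _ _ h]; simp [h, hst, hb]
    · rw [eP _ _ h]; simp [h, ca _ h, hst, hb]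
    · rw [eR0b _ h]; simp [cb' _ h, cb _ h, hst, hb]
    · rw [eR1b _ h]; simp [cb' _ h, cb _ h, hst, hb]
    · rw [eR0c _ h]; simp [h, hst.symm, ha (ct _ h), hb]
    · rw [eR1c _ h]; simp [h, hst.symm, ha (ct _ h), hb]
    · rw [eC _ _ h]; simp [h, hst.symm, ha (ct _ h), hb]
  have cP : ∀ x i j, stepCol col s t a (x, i, j) = Sum.inr 0 ↔ (x ∈ a ∧ j = 1) := by
    intro x i j
    have hb : x + p ∈ a ↔ (col x = s ∧ x ∉ a) :=
      ⟨fun h => ⟨cb x h, cb' x h⟩, fun h => ((h1 x).1 h.1).resolve_left h.2⟩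
    have ha : col x ≠ s → x ∉ a := fun h h' => h (ca x h')
    rcases hcases x i j with h | ⟨h, rfl⟩ | ⟨h, rfl⟩ | ⟨h, rfl, rfl⟩ | ⟨h, rfl, rfl⟩ |
      ⟨h, rfl, rfl⟩ | ⟨h, rfl, rfl⟩ | ⟨h, rfl⟩
    · rw [eO _ _ _ h.1 h.2]; simp [h.1, h.2, ha h.1, hb]
    · rw [eQ _ _ h]; simp [h, hst, hb]
    · rw [eP _ _ h]; simp [h, ca _ h, hst, hb]
    · rw [eR0b _ h]; simp [cb' _ h, cb _ h, hst, hb]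
    · rw [eR1b _ h]; simp [cb' _ h, cb _ h, hst, hb]
    · rw [eR0c _ h]; simp [h, hst.symm, ha (ct _ h), hb]
    · rw [eR1c _ h]; simp [h, hst.symm, ha (ct _ h), hb]
    · rw [eC _ _ h]; simp [h, hst.symm, ha (ct _ h), hb]
  have cC : ∀ x i j, stepCol col s t a (x, i, j) = Sum.inl t ↔ (col x = t ∧ i = 1) := by
    intro x i j
    have hb : x + p ∈ a ↔ (col x = s ∧ x ∉ a) :=
      ⟨fun h => ⟨cb x h, cb' x h⟩, fun h => ((h1 x).1 h.1).resolve_left h.2⟩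
    have ha : col x ≠ s → x ∉ a := fun h h' => h (ca x h')
    rcases hcases x i j with h | ⟨h, rfl⟩ | ⟨h, rfl⟩ | ⟨h, rfl, rfl⟩ | ⟨h, rfl, rfl⟩ |
      ⟨h, rfl, rfl⟩ | ⟨h, rfl, rfl⟩ | ⟨h, rfl⟩
    · rw [eO _ _ _ h.1 h.2]; simp [h.1, h.2, ha h.1, hb]
    · rw [eQ _ _ h]; simp [h, hst, hb]
    · rw [eP _ _ h]; simp [h, ca _ h, hst, hb]
    · rw [eR0b _ h]; simp [cb' _ h, cb _ h, hst, hb]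
    · rw [eR1b _ h]; simp [cb' _ h, cb _ h, hst, hb]
    · rw [eR0c _ h]; simp [h, hst.symm, ha (ct _ h), hb]
    · rw [eR1c _ h]; simp [h, hst.symm, ha (ct _ h), hb]
    · rw [eC _ _ h]; simp [h, hst.symm, ha (ct _ h), hb]
  have cR0 : ∀ x i j, stepCol col s t a (x, i, j) = Sum.inr 1 ↔
      (x + p ∈ a ∧ i = 0 ∧ j = 1) ∨ (x + q ∈ a ∧ i = 0 ∧ j = 0) := by
    intro x i j
    have hb : x + p ∈ a ↔ (col x = s ∧ x ∉ a) :=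
      ⟨fun h => ⟨cb x h, cb' x h⟩, fun h => ((h1 x).1 h.1).resolve_left h.2⟩
    have ha : col x ≠ s → x ∉ a := fun h h' => h (ca x h')
    rw [← h3]
    rcases hcases x i j with h | ⟨h, rfl⟩ | ⟨h, rfl⟩ | ⟨h, rfl, rfl⟩ | ⟨h, rfl, rfl⟩ |
      ⟨h, rfl, rfl⟩ | ⟨h, rfl, rfl⟩ | ⟨h, rfl⟩
    · rw [eO _ _ _ h.1 h.2]; simp [h.1, h.2, ha h.1, hb]
    · rw [eQ _ _ h]; simp [h, hst, hb]
    · rw [eP _ _ h]; simp [h, ca _ h, hst, hb]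
    · rw [eR0b _ h]; simp [cb' _ h, cb _ h, hst, hb]
    · rw [eR1b _ h]; simp [cb' _ h, cb _ h, hst, hb]
    · rw [eR0c _ h]; simp [h, hst.symm, ha (ct _ h), hb]
    · rw [eR1c _ h]; simp [h, hst.symm, ha (ct _ h), hb]
    · rw [eC _ _ h]; simp [h, hst.symm, ha (ct _ h), hb]
  have cR1 : ∀ x i j, stepCol col s t a (x, i, j) = Sum.inr 2 ↔
      (x + p ∈ a ∧ i = 1 ∧ j = 1) ∨ (x + q ∈ a ∧ i = 0 ∧ j = 1) := by
    intro x i j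
    have hb : x + p ∈ a ↔ (col x = s ∧ x ∉ a) :=
      ⟨fun h => ⟨cb x h, cb' x h⟩, fun h => ((h1 x).1 h.1).resolve_left h.2⟩
    have ha : col x ≠ s → x ∉ a := fun h h' => h (ca x h')
    rw [← h3]
    rcases hcases x i j with h | ⟨h, rfl⟩ | ⟨h, rfl⟩ | ⟨h, rfl, rfl⟩ | ⟨h, rfl, rfl⟩ |
      ⟨h, rfl, rfl⟩ | ⟨h, rfl, rfl⟩ | ⟨h, rfl⟩
    · rw [eO _ _ _ h.1 h.2]; simp [h.1, h.2, ha h.1, hb]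
    · rw [eQ _ _ h]; simp [h, hst, hb]
    · rw [eP _ _ h]; simp [h, ca _ h, hst, hb]
    · rw [eR0b _ h]; simp [cb' _ h, cb _ h, hst, hb]
    · rw [eR1b _ h]; simp [cb' _ h, cb _ h, hst, hb]
    · rw [eR0c _ h]; simp [h, hst.symm, ha (ct _ h), hb]
    · rw [eR1c _ h]; simp [h, hst.symm, ha (ct _ h), hb]
    · rw [eC _ _ h]; simp [h, hst.symm, ha (ct _ h), hb]
  have hβ : α + p + p ∈ a := by rwa [hcan]
  have hγ : α + q + q ∈ a := by rwa [hcan]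
  have cα := ca _ hα
  have cβ := cb _ hβ
  have cγ := cc _ hγ
  -- sums of three points
  have fl3 : ∀ x y z u v w : V, x + u ∈ a → y + v ∈ a → z + w ∈ a →
      (x + y + z) + (u + v + w) ∈ a := by
    intro x y z u v w hx hy hz
    have := hf _ hx _ hy _ hz
    have e : x + u + (y + v) + (z + w) = (x + y + z) + (u + v + w) := by abel
    rwa [e] at this
  have k1 : ∀ u v : V, u + u + v = v := fun u v => by rw [hV, zero_add]
  have k2 : ∀ u v : V, u + v + u = v := fun u v => by rw [add_right_comm, hV, zero_add]
  have k3 : ∀ u v : V, v + u + u = v := fun u v => hcan v u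
  have flat' : ∀ c, Flat {x | stepCol col s t a x = c} := by
    rintro c ⟨x, i, j⟩ hx ⟨y, k, l⟩ hy ⟨z, m, n⟩ hz
    simp only [Set.mem_ofPred_eq, Prod.mk_add_mk] at *
    have key : ∀ r, col x = r → col y = r → col z = r → col (x + y + z) = r := by
      intro r h1 h2 h3; rw [h.flat x y z (h2.trans h1.symm) (h3.trans h1.symm), h1]
    rcases c with c | c
    · by_cases hs : c = s
      · subst hs
        rw [cQ] at *
        exact ⟨key _ hx.1 hy.1 hz.1, by simp [hx.2, hy.2, hz.2]⟩
      by_cases ht : c = t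
      · subst ht
        rw [cC] at *
        exact ⟨key _ hx.1 hy.1 hz.1, by rw [hx.2, hy.2, hz.2]; decide⟩
      rw [cO _ _ _ _ hs ht] at *
      exact key _ hx hy hz
    · fin_cases c
      · simp only [Fin.zero_eta, Fin.mk_one, Fin.reduceFinMk] at *
        rw [cP] at *
        exact ⟨hf _ hx.1 _ hy.1 _ hz.1, by rw [hx.2, hy.2, hz.2]; decide⟩
      · simp only [Fin.zero_eta, Fin.mk_one, Fin.reduceFinMk] at *
        rw [cR0] at *
        rcases hx with ⟨hx, rfl, rfl⟩ | ⟨hx, rfl, rfl⟩ <;>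
        rcases hy with ⟨hy, rfl, rfl⟩ | ⟨hy, rfl, rfl⟩ <;>
        rcases hz with ⟨hz, rfl, rfl⟩ | ⟨hz, rfl, rfl⟩ <;>
        · have := fl3 _ _ _ _ _ _ hx hy hz
          simp only [k1, k2, k3] at this
          simp [this, h11]
      · simp only [Fin.zero_eta, Fin.mk_one, Fin.reduceFinMk] at *
        rw [cR1] at *
        rcases hx with ⟨hx, rfl, rfl⟩ | ⟨hx, rfl, rfl⟩ <;>
        rcases hy with ⟨hy, rfl, rfl⟩ | ⟨hy, rfl, rfl⟩ <;>
        rcases hz with ⟨hz, rfl, rfl⟩ | ⟨hz, rfl, rfl⟩ <;>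
        · have := fl3 _ _ _ _ _ _ hx hy hz
          simp only [k1, k2, k3] at this
          simp [this, h11]
  refine ⟨⟨?_, ⟨Sum.inl s, Sum.inl t, by simpa using hst⟩, ?_, ?_, ?_⟩, ?_⟩
  · rintro (c | c)
    · obtain ⟨x, rfl⟩ := h.surj c
      exact ⟨_, e10 x⟩
    · fin_cases c
      · exact ⟨_, eP α 0 hα⟩
      · exact ⟨_, eR0b _ hβ⟩
      · exact ⟨_, eR1b _ hβ⟩
  · intro x y z hy hz
    exact flat' _ x rfl y hy z hz
  · rintro ⟨w, κ, l⟩ hv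
    have q1 := hv (α, 0, 0)
    rw [eQ _ _ cα, Prod.mk_add_mk, Prod.mk_add_mk, cQ] at q1
    have q2 := hv (α + q, 1, 0)
    rw [eC _ _ cγ, Prod.mk_add_mk, Prod.mk_add_mk, cC] at q2
    have hl : l = 0 := by simpa using q1.2
    have hk : κ = 0 := by simpa using q2.2
    subst hl hk
    have : w = 0 := h.tight w fun x => by
      have := hv (x, 1, 0)
      rw [Prod.mk_add_mk, Prod.mk_add_mk, zero_add, zero_add, e10, e10] at this
      simpa using this
    rw [this]; rfl
  · intro S hS
    -- membership transfer
    have mem : ∀ {x : V × ZMod 2 × ZMod 2} {c}, stepCol col s t a x = c →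
      (x ∈ stepCol col s t a ⁻¹' S ↔ c ∈ S) := by
      rintro x c rfl; rfl
    have add3 : ∀ {x y z : V × ZMod 2 × ZMod 2} {c d e f}, c ∈ S → d ∈ S → e ∈ S →
        stepCol col s t a x = c → stepCol col s t a y = d → stepCol col s t a z = e →
        stepCol col s t a (x + y + z) = f → f ∈ S := by
      intro x y z c d e f hc hd he hx hy hz hf
      exact (mem hf).1 (hS _ ((mem hx).2 hc) _ ((mem hy).2 hd) _ ((mem hz).2 he))
    by_cases hex : ∃ i, i ≠ s ∧ i ≠ t ∧ Sum.inl i ∈ S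
    · obtain ⟨i0, hs0, ht0, hi0⟩ := hex
      obtain ⟨x0, rfl⟩ := h.surj i0
      -- invariance under the last two coordinates
      have inv : ∀ x i j i' j' c d, stepCol col s t a (x, i, j) = c →
          stepCol col s t a (x, i', j') = d → c ∈ S → d ∈ S := by
        intro x i j i' j' c d hc hd hcS
        refine add3 hcS hi0 hi0 hc (eO x0 0 0 hs0 ht0) (eO x0 (i + i') (j + j') hs0 ht0) ?_
        rw [← hd]
        congr 1
        simp only [Prod.mk_add_mk, add_zero, hcan]
        have : ∀ u v : ZMod 2, u + (u + v) = v := by decide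
        simp [this]
      have i1 : Sum.inl s ∈ S ↔ Sum.inr 0 ∈ S :=
        ⟨inv _ _ _ _ _ _ _ (eQ α 0 cα) (eP α 0 hα), inv _ _ _ _ _ _ _ (eP α 0 hα) (eQ α 0 cα)⟩
      have i2 : Sum.inl s ∈ S ↔ Sum.inr 1 ∈ S :=
        ⟨inv _ _ _ _ _ _ _ (eQ _ 0 cβ) (eR0b _ hβ), inv _ _ _ _ _ _ _ (eR0b _ hβ) (eQ _ 0 cβ)⟩
      have i3 : Sum.inl s ∈ S ↔ Sum.inr 2 ∈ S :=
        ⟨inv _ _ _ _ _ _ _ (eQ _ 0 cβ) (eR1b _ hβ), inv _ _ _ _ _ _ _ (eR1b _ hβ) (eQ _ 0 cβ)⟩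
      have hflat : Flat (col ⁻¹' {i | Sum.inl i ∈ S}) := by
        intro x hx y hy z hz
        exact add3 hx hy hz (e10 x) (e10 y) (e10 z) (by
          rw [← e10]; congr 1)
      rcases h.irr _ hflat with hh | hh
      · left
        have hsS : Sum.inl s ∉ S := fun hs => hs0 (hh _ hi0 _ hs)
        have only : ∀ c ∈ S, c = Sum.inl (col x0) := by
          rintro (c | c) hc
          · rw [hh _ hi0 _ hc]
          · exfalso
            fin_cases c
            · exact hsS (i1.2 hc)
            · exact hsS (i2.2 hc)
            · exact hsS (i3.2 hc)
        intro c hc d hd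
        rw [only c hc, only d hd]
      · right
        have hall : ∀ i, Sum.inl i ∈ S := fun i => by
          have : i ∈ {i | Sum.inl i ∈ S} := by rw [hh]; trivial
          exact this
        rw [Set.eq_univ_iff_forall]
        rintro (c | c)
        · exact hall c
        · fin_cases c
          · exact i1.1 (hall s)
          · exact i2.1 (hall s)
          · exact i3.1 (hall s)
    · left
      push Not at hex
      have hδs : col (α + (α + p) + (α + q)) ≠ s := by
        have e : α + (α + p) + (α + q) = α + p + q := by
          rw [← add_assoc α α p, hV, zero_add]; abel
        rw [e]
        intro hh
        rcases (h1 _).1 hh with hh | hh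
        · exact ct _ ((h3 _).2 hh) cβ
        · have e : α + p + q + p = α + q := by
            rw [add_right_comm, hcan]
          rw [e] at hh
          exact ct _ ((h3 _).2 hh) cα
      have hδt : col (α + (α + p) + (α + q)) ≠ t := by
        have e : α + (α + p) + (α + q) = α + p + q := by
          rw [← add_assoc α α p, hV, zero_add]; abel
        rw [e]
        intro hh
        have := (h3 _).1 hh
        rw [hcan] at this
        exact h2 α ⟨hα, this⟩
      have three : ∀ {i j i' j' i'' j'' c d e}, c ∈ S → d ∈ S → e ∈ S →
          stepCol col s t a (α, i, j) = c → stepCol col s t a (α + p, i', j') = d →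
          stepCol col s t a (α + q, i'', j'') = e → False := by
        intro i j i' j' i'' j'' c d e hc hd he h1 h2 h3
        have := add3 hc hd he h1 h2 h3 (eO _ _ _ hδs hδt)
        exact hex _ hδs hδt this
      have QR0 : Sum.inl s ∈ S → Sum.inr 1 ∈ S → False := fun x y =>
        three x x y (eQ α 0 cα) (eQ _ 0 cβ) (eR0c _ cγ)
      have QR1 : Sum.inl s ∈ S → Sum.inr 2 ∈ S → False := fun x y =>
        three x x y (eQ α 0 cα) (eQ _ 0 cβ) (eR1c _ cγ)
      have QC : Sum.inl s ∈ S → Sum.inl t ∈ S → False := fun x y =>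
        three x x y (eQ α 0 cα) (eQ _ 0 cβ) (eC _ 0 cγ)
      have PR0 : Sum.inr 0 ∈ S → Sum.inr 1 ∈ S → False := fun x y =>
        three x y y (eP α 0 hα) (eR0b _ hβ) (eR0c _ cγ)
      have PR1 : Sum.inr 0 ∈ S → Sum.inr 2 ∈ S → False := fun x y =>
        three x y y (eP α 0 hα) (eR1b _ hβ) (eR1c _ cγ)
      have QP : Sum.inl s ∈ S → Sum.inr 0 ∈ S → False := fun x y =>
        QR0 x (add3 x y x (eQ α 0 cα) (eP α 0 hα) (eQ _ 0 cβ) (by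
          have := eR0b _ hβ
          simpa [hV] using this))
      have PC : Sum.inr 0 ∈ S → Sum.inl t ∈ S → False := fun x y =>
        QC (add3 y y x (eC _ 0 cγ) (eC _ 1 cγ) (eP α 0 hα) (by
          have := eQ _ 0 cα
          simpa [hV, h11] using this)) y
      have RR : Sum.inr 1 ∈ S → Sum.inr 2 ∈ S → False := fun x y =>
        QR0 (add3 x y x (eR0c _ cγ) (eR1c _ cγ) (eR0b _ hβ) (by
          have := eQ _ 0 cβ
          simpa [hV, h11] using this)) x
      have R0C : Sum.inr 1 ∈ S → Sum.inl t ∈ S → False := fun x y =>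
        RR x (add3 x y x (eR0c _ cγ) (eC _ 0 cγ) (eR0b _ hβ) (by
          have := eR1b _ hβ
          simpa [hV, h11] using this))
      have R1C : Sum.inr 2 ∈ S → Sum.inl t ∈ S → False := fun x y =>
        RR (add3 x y x (eR1c _ cγ) (eC _ 1 cγ) (eR1b _ hβ) (by
          have := eR0b _ hβ
          simpa [hV, h11] using this)) x
      have five : ∀ c ∈ S, c = Sum.inl s ∨ c = Sum.inl t ∨ c = Sum.inr 0 ∨ c = Sum.inr 1 ∨
          c = Sum.inr 2 := by
        rintro (c | c) hc
        · by_cases hs : c = s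
          · simp [hs]
          by_cases ht : c = t
          · simp [ht]
          exact absurd hc (hex c hs ht)
        · fin_cases c <;> simp
      intro c hc d hd
      rcases five c hc with rfl | rfl | rfl | rfl | rfl <;>
      rcases five d hd with rfl | rfl | rfl | rfl | rfl <;>
      first
        | rfl
        | exact (QP hc hd).elim
        | exact (QP hd hc).elim
        | exact (QR0 hc hd).elim
        | exact (QR0 hd hc).elim
        | exact (QR1 hc hd).elim
        | exact (QR1 hd hc).elim
        | exact (QC hc hd).elim
        | exact (QC hd hc).elim
        | exact (PR0 hc hd).elim
        | exact (PR0 hd hc).elim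
        | exact (PR1 hc hd).elim
        | exact (PR1 hd hc).elim
        | exact (PC hc hd).elim
        | exact (PC hd hc).elim
        | exact (RR hc hd).elim
        | exact (RR hd hc).elim
        | exact (R0C hc hd).elim
        | exact (R0C hd hc).elim
        | exact (R1C hc hd).elim
        | exact (R1C hd hc).elim
  · refine ⟨Sum.inl s, Sum.inr 0, {x | x.1 ∈ a ∧ x.2.2 = 0}, (p, 0, 0), (0, 0, 1), by simp,
      ⟨(α, 0, 0), hα, rfl⟩, ?_, ?_, ?_, ?_⟩
    · rintro x ⟨hx, hx'⟩ y ⟨hy, hy'⟩ z ⟨hz, hz'⟩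
      exact ⟨hf _ hx _ hy _ hz, by simp [hx', hy', hz']⟩
    · rintro ⟨x, i, j⟩
      rw [cQ, h1]
      simp only [Set.mem_ofPred_eq, Prod.mk_add_mk, add_zero]
      tauto
    · rintro ⟨x, i, j⟩ ⟨hx, hy⟩
      exact h2 x ⟨hx.1, hy.1⟩
    · rintro ⟨x, i, j⟩
      rw [cP]
      simp only [Set.mem_ofPred_eq, Prod.mk_add_mk, add_zero]
      rcases z2 j with rfl | rfl <;> simp [h11]

end step

/-- Existence over `F_2^m` of a good colouring with `N` colours and a pair. -/
def Ex (m N : ℕ) : Prop :=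
  ∃ (I : Type) (_ : Fintype I) (col : (Fin m → ZMod 2) → I),
    Fintype.card I = N ∧ Good col ∧ HasPair col

lemma transfer {V : Type} [AddCommGroup V] [Module (ZMod 2) V] [Module.Finite (ZMod 2) V] (m : ℕ)
    (hm : Module.finrank (ZMod 2) V = m) : Nonempty ((Fin m → ZMod 2) ≃+ V) :=
  ⟨(LinearEquiv.ofFinrankEq (R := ZMod 2) (Fin m → ZMod 2) V (by simp [hm])).toAddEquiv⟩

lemma Ex.step {m N : ℕ} (h : Ex m N) : Ex (m + 2) (N + 3) := by
  obtain ⟨I, _, col, hN, hg, s, t, a, p, q, hst, hne, hf, h1, h2, h3⟩ := h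
  obtain ⟨hg', hp'⟩ := step_good (fun v => by
    funext i; exact CharTwo.add_self_eq_zero _) hg hst hne hf h1 h2 h3
  obtain ⟨e⟩ := transfer (V := (Fin m → ZMod 2) × ZMod 2 × ZMod 2) (m + 2) (by simp)
  exact ⟨I ⊕ Fin 3, inferInstance, _, by simp [hN], hg'.comp e, hp'.comp e⟩

lemma final {m N : ℕ} {I : Type} [Fintype I] {col : (Fin m → ZMod 2) → I}
    (hN : Fintype.card I = N) (h : Good col) :
    ∃ A : Set (AffineSubspace (ZMod 2) (Fin m → ZMod 2)),
      IsAVSP A ∧ IsTight A ∧ ¬ IsReducible A ∧ A.ncard = N := by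
  have hneg : ∀ v : Fin m → ZMod 2, -v = v := fun v => by
    funext i; exact CharTwo.neg_eq _
  let F : I → AffineSubspace (ZMod 2) (Fin m → ZMod 2) := fun i =>
    { carrier := {x | col x = i}
      smul_vsub_vadd_mem' := by
        intro c x y z hx hy hz
        simp only [Set.mem_ofPred_eq] at *
        rcases z2 c with rfl | rfl
        · simpa using hz
        · subst hx
          have := h.flat x y z hy hz
          rwa [one_smul, vsub_eq_sub, vadd_eq_add, sub_eq_add_neg, hneg] }
  have hF : ∀ i x, x ∈ F i ↔ col x = i := fun i x => Iff.rfl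
  have hinj : Function.Injective F := by
    intro i j hij
    obtain ⟨x, rfl⟩ := h.surj i
    have : x ∈ F j := hij ▸ (hF _ _).2 rfl
    exact (hF _ _).1 this
  refine ⟨Set.range F, ⟨?_, ?_, ?_⟩, ?_, ?_, ?_⟩
  · rintro _ ⟨i, rfl⟩ htop
    have hall : ∀ j, j = i := fun j => by
      obtain ⟨x, rfl⟩ := h.surj j
      have : x ∈ F i := htop ▸ AffineSubspace.mem_top _ _ _
      exact this
    obtain ⟨j, k, hjk⟩ := h.nontriv
    exact hjk ((hall j).trans (hall k).symm)
  · rintro _ ⟨i, rfl⟩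
    obtain ⟨x, hx⟩ := h.surj i
    exact ⟨x, hx⟩
  · intro x
    refine ⟨F (col x), ⟨⟨_, rfl⟩, rfl⟩, ?_⟩
    rintro _ ⟨⟨i, rfl⟩, hx⟩
    rw [(hF _ _).1 hx]
  · intro v hv
    by_contra hcon
    push Not at hcon
    apply hv
    apply h.tight
    intro x
    have := hcon (F (col x)) ⟨_, rfl⟩
    have hm : v +ᵥ x ∈ v +ᵥ (F (col x) : Set (Fin m → ZMod 2)) :=
      Set.vadd_mem_vadd_set (show x ∈ (F (col x) : Set _) from rfl)
    rw [this] at hm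
    exact hm
  · rintro ⟨U, hU, S, hSA, hcard, hle, hcov⟩
    have hpre : ∀ x, x ∈ col ⁻¹' {i | F i ∈ S} ↔ x ∈ U := by
      intro x
      constructor
      · intro hx
        exact hle _ hx ((hF _ _).2 rfl)
      · intro hx
        obtain ⟨s, ⟨hs, hxs⟩, -⟩ := hcov x hx
        obtain ⟨i, rfl⟩ := hSA hs
        have : col x = i := hxs
        subst this
        exact hs
    rcases h.irr {i | F i ∈ S} (by
      intro x hx y hy z hz
      rw [hpre] at *
      have := U.smul_vsub_vadd_mem 1 hx hy hz
      rwa [one_smul, vsub_eq_sub, vadd_eq_add, sub_eq_add_neg, hneg] at this) with hh | hh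
    · rw [Set.one_lt_ncard_iff_nontrivial_and_finite] at hcard
      obtain ⟨s, hs, t, ht, hst⟩ := hcard.1
      obtain ⟨i, rfl⟩ := hSA hs
      obtain ⟨j, rfl⟩ := hSA ht
      exact hst (by rw [hh i hs j ht])
    · apply hU
      ext x
      rw [← hpre, hh]
      simp
  · rw [← Set.image_univ, Set.ncard_image_of_injective _ hinj, Set.ncard_univ,
      Nat.card_eq_fintype_card, hN]

/-- A finitary criterion for irreducibility, with certificate `R`. -/
lemma irr_of_cert {V I : Type} [AddCommGroup V] (col : V → I)
    (R : List (V × V × V))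
    (hR : ∀ b : I → Bool, (∀ r ∈ R, b (col r.1) → b (col r.2.1) → b (col r.2.2) →
      b (col (r.1 + r.2.1 + r.2.2))) → (∀ i j, b i → b j → i = j) ∨ ∀ i, b i) :
    ∀ S : Set I, Flat (col ⁻¹' S) → (∀ i ∈ S, ∀ j ∈ S, i = j) ∨ S = Set.univ := by
  classical
  intro S hS
  rcases hR (fun i => decide (i ∈ S)) (fun r _ h1 h2 h3 => decide_eq_true
    (hS _ (of_decide_eq_true h1) _ (of_decide_eq_true h2) _ (of_decide_eq_true h3))) with h | h
  · left
    intro i hi j hj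
    exact h i j (decide_eq_true hi) (decide_eq_true hj)
  · right
    exact Set.eq_univ_iff_forall.2 fun i => of_decide_eq_true (h i)

abbrev V3 := ZMod 2 × ZMod 2 × ZMod 2
abbrev V4 := ZMod 2 × V3
abbrev V5 := ZMod 2 × V4

/-- Binary digits, least significant first. -/
def n3 (n : ℕ) : V3 := (n, (n / 2 : ℕ), (n / 4 : ℕ))
def n4 (n : ℕ) : V4 := (n, n3 (n / 2))
def n5 (n : ℕ) : V5 := (n, n4 (n / 2))

def v3 (x : V3) : ℕ := x.1.val + 2 * (x.2.1.val + 2 * x.2.2.val)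
def v4 (x : V4) : ℕ := x.1.val + 2 * v3 x.2
def v5 (x : V5) : ℕ := x.1.val + 2 * v4 x.2

def col3 (x : V3) : Fin 4 := [0, 0, 1, 2, 3, 2, 1, 3].getD (v3 x) 0
def col4 (x : V4) : Fin 6 := [0, 0, 0, 0, 2, 2, 1, 1, 3, 4, 3, 5, 2, 2, 5, 4].getD (v4 x) 0
def col5 (x : V5) : Fin 7 :=
  [0, 0, 0, 0, 0, 0, 0, 0, 1, 1, 1, 1, 2, 2, 3, 3, 4, 5, 4, 6, 4, 6, 4, 5, 6, 5, 3, 3, 2, 2,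
    6, 5].getD (v5 x) 0

set_option maxRecDepth 100000
set_option maxHeartbeats 4000000

lemma good3 : Good col3 := by
  refine ⟨by unfold Function.Surjective; decide, by decide, by decide, by decide, ?_⟩
  apply irr_of_cert col3 ([(0, 1, 5), (0, 1, 6), (0, 1, 7), (2, 5, 6), (2, 6, 7), (3, 4, 7)].map
    fun r : ℕ × ℕ × ℕ => (n3 r.1, n3 r.2.1, n3 r.2.2))
  decide

lemma good4 : Good col4 := by
  refine ⟨by unfold Function.Surjective; decide, by decide, by decide, by decide, ?_⟩
  apply irr_of_cert col4 ([(0, 1, 10), (0, 2, 6), (0, 4, 12), (0, 9, 15), (2, 11, 14), (4, 6, 13), (4, 8, 12),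
    (4, 12, 14), (4, 12, 15), (6, 8, 10), (6, 9, 15), (6, 11, 14), (8, 10, 14), (8, 10, 15),
    (9, 14, 15)].map
    fun r : ℕ × ℕ × ℕ => (n4 r.1, n4 r.2.1, n4 r.2.2))
  decide

lemma good5 : Good col5 := by
  refine ⟨by unfold Function.Surjective; decide, by decide, by decide, by decide, ?_⟩
  apply irr_of_cert col5 ([(0, 1, 18), (0, 4, 10), (0, 12, 28), (0, 14, 26), (0, 17, 25), (0, 19, 24), (8, 10, 27),
    (8, 10, 29), (8, 16, 22), (8, 17, 25), (8, 19, 24), (12, 16, 28), (12, 26, 28), (12, 28, 30),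
    (12, 28, 31), (14, 16, 26), (14, 24, 26), (14, 25, 26), (16, 18, 30), (16, 18, 31),
    (17, 24, 25)].map
    fun r : ℕ × ℕ × ℕ => (n5 r.1, n5 r.2.1, n5 r.2.2))
  decide

lemma pair4 : HasPair col4 := by
  refine ⟨0, 1, {x | v4 x < 2}, n4 2, n4 6, by decide, ⟨0, by decide⟩, ?_, ?_, ?_, ?_⟩
  · unfold Flat; simp only [Set.mem_ofPred_eq]; decide
  · simp only [Set.mem_ofPred_eq]; decide
  · simp only [Set.mem_ofPred_eq]; decide
  · simp only [Set.mem_ofPred_eq]; decide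

lemma pair5 : HasPair col5 := by
  refine ⟨0, 1, {x | v5 x < 4}, n5 4, n5 8, by decide, ⟨0, by decide⟩, ?_, ?_, ?_, ?_⟩
  · unfold Flat; simp only [Set.mem_ofPred_eq]; decide
  · simp only [Set.mem_ofPred_eq]; decide
  · simp only [Set.mem_ofPred_eq]; decide
  · simp only [Set.mem_ofPred_eq]; decide

lemma ex_all (k : ℕ) : Ex (2 * k + 4) (3 * k + 6) ∧ Ex (2 * k + 5) (3 * k + 7) := by
  induction k with
  | zero =>
    obtain ⟨e⟩ := transfer (V := V4) 4 (by simp)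
    obtain ⟨f⟩ := transfer (V := V5) 5 (by simp)
    exact ⟨⟨Fin 6, inferInstance, _, by simp, good4.comp e, pair4.comp e⟩,
      ⟨Fin 7, inferInstance, _, by simp, good5.comp f, pair5.comp f⟩⟩
  | succ k ih => exact ⟨ih.1.step, ih.2.step⟩

theorem stmt17 (n : ℕ) (hn : 4 ≤ n) :
    ∃ A : Set (AffineSubspace (ZMod 2) (Fin (n - 1) → ZMod 2)),
      IsAVSP A ∧ IsTight A ∧ ¬ IsReducible A ∧ A.ncard = (3 * n - 3) / 2 := by
  by_cases h4 : n = 4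
  · subst h4
    obtain ⟨e⟩ := transfer (V := V3) 3 (by simp)
    exact final (by simp) (good3.comp e)
  · rcases Nat.even_or_odd' n with ⟨c, hc | hc⟩
    · obtain ⟨k, rfl⟩ : ∃ k, c = k + 3 := ⟨c - 3, by omega⟩
      obtain ⟨I, _, col, hI, hg, -⟩ := (ex_all k).2
      have e1 : n - 1 = 2 * k + 5 := by omega
      have e2 : (3 * n - 3) / 2 = 3 * k + 7 := by omega
      rw [e1, e2]
      exact final hI hg
    · obtain ⟨k, rfl⟩ : ∃ k, c = k + 2 := ⟨c - 2, by omega⟩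
      obtain ⟨I, _, col, hI, hg, -⟩ := (ex_all k).1
      have e1 : n - 1 = 2 * k + 4 := by omega
      have e2 : (3 * n - 3) / 2 = 3 * k + 6 := by omega
      rw [e1, e2]
      exact final hI hg
end
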